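/- Let β = √((5+√17)/2). Then the 3×3 real matrix [[1/(√2·β), −√(2β²−1)/(√2·β), 0], [√(β²+1)/(√2·β), (1/(√2·β))·√((β²+1)/(2β²−1)), −√((β²−2)/(2β²−1))], [√(β²−2)/(√2·β), (1/(√2·β))·√((β²−2)/(2β²−1)), √((β²+1)/(2β²−1))]] is orthogonal (its rows form an orthonormal basis of ℝ³). -/

import Mathlib

namespace AsaedaHaagerupStmt10

noncomputable def beta : ℝ := Real.sqrt ((5 + Real.sqrt 17) / 2)

noncomputable def U : Matrix (Fin 3) (Fin 3) ℝ :=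
  !![1 / (Real.sqrt 2 * beta),
       -(Real.sqrt (2 * beta ^ 2 - 1) / (Real.sqrt 2 * beta)), 0;
     Real.sqrt (beta ^ 2 + 1) / (Real.sqrt 2 * beta),
       (1 / (Real.sqrt 2 * beta)) *
         Real.sqrt ((beta ^ 2 + 1) / (2 * beta ^ 2 - 1)),
       -Real.sqrt ((beta ^ 2 - 2) / (2 * beta ^ 2 - 1));
     Real.sqrt (beta ^ 2 - 2) / (Real.sqrt 2 * beta),
       (1 / (Real.sqrt 2 * beta)) *
         Real.sqrt ((beta ^ 2 - 2) / (2 * beta ^ 2 - 1)),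
       Real.sqrt ((beta ^ 2 + 1) / (2 * beta ^ 2 - 1))]

section GivensRotation

open Matrix

variable {n R : Type*} [DecidableEq n] [CommRing R]

/-- The Givens rotation in the coordinate plane of `i ≠ j`, with cosine `c` and sine `s`, sending
`eᵢ` to `c eᵢ + s eⱼ` and `eⱼ` to `c eⱼ - s eᵢ`. Here `c` and `s` are arbitrary ring elements; the
matrix is an actual rotation when `c ^ 2 + s ^ 2 = 1`. -/
def givensRotation (i j : n) (c s : R) : Matrix n n R :=
  1 + (c - 1) • (single i i 1 + single j j 1) + s • (single j i 1 - single i j 1)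

theorem transpose_givensRotation (i j : n) (c s : R) :
    (givensRotation i j c s)ᵀ = givensRotation i j c (-s) := by
  simp only [givensRotation, transpose_add, transpose_sub, transpose_smul, transpose_one,
    transpose_single]
  module

theorem givensRotation_one_zero (i j : n) : givensRotation i j (1 : R) 0 = 1 := by
  simp [givensRotation]

theorem givensRotation_mul_givensRotation [Fintype n] {i j : n} (hij : i ≠ j) (c s c' s' : R) :
    givensRotation i j c s * givensRotation i j c' s' =
      givensRotation i j (c * c' - s * s') (s * c' + c * s') := by
  simp only [givensRotation, add_mul, mul_add, sub_mul, mul_sub, smul_mul_assoc, mul_smul_comm,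
    one_mul, mul_one, single_mul_single_same, single_mul_single_of_ne _ _ _ _ hij,
    single_mul_single_of_ne _ _ _ _ hij.symm]
  module

theorem givensRotation_mem_orthogonalGroup [Fintype n] {i j : n} (hij : i ≠ j) {c s : R}
    (hcs : c ^ 2 + s ^ 2 = 1) : givensRotation i j c s ∈ orthogonalGroup n R := by
  have hcos : c * c - s * -s = 1 := by linear_combination hcs
  have hsin : s * c + c * -s = 0 := by ring
  rw [mem_orthogonalGroup_iff, transpose_givensRotation,
    givensRotation_mul_givensRotation hij, hcos, hsin, givensRotation_one_zero]

end GivensRotation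

/-- The block `U` as a function of the parameter: `U` is its value at `x = beta`. The radicands are
nonnegative, as the formula intends, when `2 ≤ x ^ 2`. -/
noncomputable def connectionBlock (x : ℝ) : Matrix (Fin 3) (Fin 3) ℝ :=
  !![1 / (√2 * x), -(√(2 * x ^ 2 - 1) / (√2 * x)), 0;
     √(x ^ 2 + 1) / (√2 * x), (1 / (√2 * x)) * √((x ^ 2 + 1) / (2 * x ^ 2 - 1)),
       -√((x ^ 2 - 2) / (2 * x ^ 2 - 1));
     √(x ^ 2 - 2) / (√2 * x), (1 / (√2 * x)) * √((x ^ 2 - 2) / (2 * x ^ 2 - 1)),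
       √((x ^ 2 + 1) / (2 * x ^ 2 - 1))]

theorem connectionBlock_eq_mul_givensRotation {x : ℝ} (hx : 0 < 2 * x ^ 2 - 1) :
    connectionBlock x =
      givensRotation 1 2 √((x ^ 2 + 1) / (2 * x ^ 2 - 1)) √((x ^ 2 - 2) / (2 * x ^ 2 - 1)) *
        givensRotation 0 1 (1 / (√2 * x)) (√(2 * x ^ 2 - 1) / (√2 * x)) := by
  have sqrt_div_mul (y : ℝ) :
      √(y / (2 * x ^ 2 - 1)) * (√(2 * x ^ 2 - 1) / (√2 * x)) = √y / (√2 * x) := by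
    rw [Real.sqrt_div' _ hx.le, div_mul_div_cancel₀ (Real.sqrt_pos.2 hx).ne']
  ext i j
  fin_cases i <;> fin_cases j <;>
    simp [connectionBlock, givensRotation, Matrix.mul_apply, Fin.sum_univ_three,
      Matrix.one_apply, Matrix.single_apply, sqrt_div_mul, mul_comm (x⁻¹ * _)]

theorem asaeda_haagerup_stmt10_general {x : ℝ} (hx : 2 ≤ x ^ 2) :
    connectionBlock x ∈ Matrix.orthogonalGroup (Fin 3) ℝ := by
  have hden : 0 < 2 * x ^ 2 - 1 := by linarith
  have hx₀ : x ≠ 0 := by rintro rfl; norm_num at hx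
  have hlast : √((x ^ 2 + 1) / (2 * x ^ 2 - 1)) ^ 2 + √((x ^ 2 - 2) / (2 * x ^ 2 - 1)) ^ 2 = 1 := by
    rw [Real.sq_sqrt (div_nonneg (by positivity) hden.le),
      Real.sq_sqrt (div_nonneg (by linarith) hden.le), ← add_div, div_eq_one_iff_eq hden.ne']
    ring
  have hfirst : (1 / (√2 * x)) ^ 2 + (√(2 * x ^ 2 - 1) / (√2 * x)) ^ 2 = 1 := by
    rw [div_pow, div_pow, Real.sq_sqrt hden.le, mul_pow, Real.sq_sqrt zero_le_two]
    field_simp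
    ring
  rw [connectionBlock_eq_mul_givensRotation hden]
  exact mul_mem (givensRotation_mem_orthogonalGroup (by decide) hlast)
    (givensRotation_mem_orthogonalGroup (by decide) hfirst)

theorem two_le_beta_sq : 2 ≤ beta ^ 2 := by
  rw [beta, Real.sq_sqrt (by positivity)]
  linarith [Real.sqrt_nonneg 17]

theorem asaeda_haagerup_stmt10 : U ∈ Matrix.orthogonalGroup (Fin 3) ℝ :=
  asaeda_haagerup_stmt10_general two_le_beta_sq

end AsaedaHaagerupStmt10
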